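/- (Theorem 1.) Let t ≥ 1 be an integer and let c > 0, ε > 0 be constants. Let x₁, …, x_m ∈ ℝ^{1×d} be row vectors with ‖x_j‖₂ = 1 for all j, let α ∈ ℝ^m be a probability vector (the attention scores at step t), and let the attention output a = (Σ_{j=1}^m α_j x_j) W_V W_O be nonzero. Let x' ∈ ℝ^{1×d} (the next token embedding) satisfy ‖x'‖₂ = 1 and a x'ᵀ ≥ (1 − δ)‖a‖₂ with 0 < δ ≤ (cε/(λ_Q λ_K λ_V λ_O))². Suppose that for every j ∈ {1, …, m}, x_j W x_jᵀ ≥ c and x_j W x_jᵀ ≥ ε^{-1} |x_i W x_jᵀ| for all i ≠ j. Define the next-step attention scores α' = softmax((1/(t+1))·x' W_Q W_Kᵀ Xᵀ) ∈ ℝ^m, where X ∈ ℝ^{m×d} has rows x₁, …, x_m, and set C_j = x_j W x_jᵀ / ((t+1)‖a‖₂) and η_j = (1+√2)·ε·x_j W x_jᵀ / ((t+1)‖a‖₂) for each j. Then for every ℓ ∈ {1, …, m}: α'_ℓ ≤ exp(C_ℓ α_ℓ + η_ℓ) / (exp(C_ℓ α_ℓ + η_ℓ) + Σ_{j ≠ ℓ}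 exp(C_j α_j − η_j)) and α'_ℓ ≥ exp(C_ℓ α_ℓ − η_ℓ) / (exp(C_ℓ α_ℓ − η_ℓ) + Σ_{j ≠ ℓ} exp(C_j α_j + η_j)). -/

import Mathlib

open Matrix BigOperators

/-- Euclidean norm of a row vector in ℝ^{1×d}. -/
noncomputable def rowNorm {d : ℕ} (x : Fin d → ℝ) : ℝ := Real.sqrt (∑ i, x i ^ 2)

/-- The ℓ²-operator norm (largest singular value) of a d×d real matrix. -/
noncomputable def opNorm2 {d : ℕ} (M : Matrix (Fin d) (Fin d) ℝ) : ℝ :=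
  ‖(Matrix.toEuclideanLin M).toContinuousLinearMap‖

/-- The softmax function on ℝ^m, defined coordinatewise by
softmax(γ)_j = exp(γ_j) / Σ_{k=1}^m exp(γ_k). -/
noncomputable def softmax {m : ℕ} (γ : Fin m → ℝ) : Fin m → ℝ :=
  fun j => Real.exp (γ j) / ∑ k, Real.exp (γ k)


lemma rowNorm_eq {d : ℕ} (v : Fin d → ℝ) : rowNorm v = ‖WithLp.toLp 2 v‖ := by
  rw [EuclideanSpace.norm_eq]
  simp [rowNorm]

lemma rowNorm_nonneg {d : ℕ} (v : Fin d → ℝ) : 0 ≤ rowNorm v := Real.sqrt_nonneg _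

lemma rowNorm_sq {d : ℕ} (v : Fin d → ℝ) : rowNorm v ^ 2 = v ⬝ᵥ v := by
  unfold rowNorm
  rw [Real.sq_sqrt (Finset.sum_nonneg fun i _ => sq_nonneg _)]
  simp [dotProduct, sq]

lemma abs_dot_le {d : ℕ} (u v : Fin d → ℝ) : |u ⬝ᵥ v| ≤ rowNorm u * rowNorm v := by
  apply abs_le_of_sq_le_sq _ (mul_nonneg (rowNorm_nonneg _) (rowNorm_nonneg _))
  rw [mul_pow, rowNorm_sq, rowNorm_sq]
  have := Finset.sum_mul_sq_le_sq_mul_sq Finset.univ u v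
  simpa [dotProduct, sq] using this

lemma rowNorm_mulVec_le {d : ℕ} (M : Matrix (Fin d) (Fin d) ℝ) (v : Fin d → ℝ) :
    rowNorm (M *ᵥ v) ≤ opNorm2 M * rowNorm v := by
  rw [rowNorm_eq, rowNorm_eq]
  exact (Matrix.toEuclideanLin M).toContinuousLinearMap.le_opNorm (WithLp.toLp 2 v)

lemma rowNorm_vecMul_le {d : ℕ} (M : Matrix (Fin d) (Fin d) ℝ) (v : Fin d → ℝ) :
    rowNorm (v ᵥ* M) ≤ opNorm2 M * rowNorm v := by
  have hM : 0 ≤ opNorm2 M := norm_nonneg _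
  have hv := rowNorm_nonneg v
  rcases (rowNorm_nonneg (v ᵥ* M)).eq_or_lt with h | h
  · rw [← h]; positivity
  have h1 : rowNorm (v ᵥ* M) ^ 2 = v ⬝ᵥ (M *ᵥ (v ᵥ* M)) := by
    rw [rowNorm_sq, Matrix.dotProduct_mulVec]
  have h2 := (le_abs_self _).trans (abs_dot_le v (M *ᵥ (v ᵥ* M)))
  have h3 := mul_le_mul_of_nonneg_left (rowNorm_mulVec_le M (v ᵥ* M)) hv
  have h4 : rowNorm (v ᵥ* M) * rowNorm (v ᵥ* M) ≤
      (opNorm2 M * rowNorm v) * rowNorm (v ᵥ* M) := by nlinarith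
  exact le_of_mul_le_mul_right h4 h

lemma bilin_le {d : ℕ} (P Q : Matrix (Fin d) (Fin d) ℝ) (y z : Fin d → ℝ) :
    |(y ᵥ* (P * Qᵀ)) ⬝ᵥ z| ≤ (opNorm2 P * rowNorm y) * (opNorm2 Q * rowNorm z) := by
  have h : (y ᵥ* (P * Qᵀ)) ⬝ᵥ z = (y ᵥ* P) ⬝ᵥ (z ᵥ* Q) := by
    rw [← Matrix.vecMul_vecMul, ← Matrix.dotProduct_mulVec, Matrix.mulVec_transpose]
  rw [h]
  refine (abs_dot_le _ _).trans ?_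
  exact mul_le_mul (rowNorm_vecMul_le _ _) (rowNorm_vecMul_le _ _) (rowNorm_nonneg _)
    (mul_nonneg (norm_nonneg _) (rowNorm_nonneg _))

lemma rowNorm_comb_le {d m : ℕ} (x : Fin m → (Fin d → ℝ)) (hx : ∀ j, rowNorm (x j) = 1)
    (α : Fin m → ℝ) (hα0 : ∀ j, 0 ≤ α j) (hα1 : ∑ j, α j = 1) :
    rowNorm (∑ j, α j • x j) ≤ 1 := by
  rw [rowNorm_eq, WithLp.toLp_sum]
  refine (norm_sum_le _ _).trans ?_
  rw [← hα1]
  refine Finset.sum_le_sum fun j _ => ?_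
  rw [WithLp.toLp_smul, norm_smul, ← rowNorm_eq, hx, Real.norm_eq_abs, abs_of_nonneg (hα0 j), mul_one]

lemma ratio_mono {p q A B : ℝ} (hp : 0 < p) (hpq : p ≤ q) (hB : 0 ≤ B) (hBA : B ≤ A) :
    p / (p + A) ≤ q / (q + B) := by
  rw [div_le_div_iff₀ (by linarith) (by linarith)]
  nlinarith [mul_le_mul hpq hBA hB (hp.le.trans hpq)]

/-- (Theorem 1.) Let t ≥ 1, c > 0, ε > 0.  Let x₁, …, x_m be unit row vectors,
α a probability vector (attention scores at step t), and the attention output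
a = (Σ_j α_j x_j) W_V W_O nonzero.  Let x' (the next token embedding) satisfy
‖x'‖₂ = 1 and a x'ᵀ ≥ (1 − δ)‖a‖₂ with 0 < δ ≤ (cε/(λ_Q λ_K λ_V λ_O))².
Suppose for every j, x_j W x_jᵀ ≥ c and x_j W x_jᵀ ≥ ε⁻¹ |x_i W x_jᵀ| for all
i ≠ j.  Let α' = softmax((1/(t+1))·x' W_Q W_Kᵀ Xᵀ), and set
C_j = x_j W x_jᵀ / ((t+1)‖a‖₂), η_j = (1+√2)·ε·x_j W x_jᵀ / ((t+1)‖a‖₂).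
Then for every ℓ:
α'_ℓ ≤ exp(C_ℓ α_ℓ + η_ℓ) / (exp(C_ℓ α_ℓ + η_ℓ) + Σ_{j ≠ ℓ} exp(C_j α_j − η_j)) and
α'_ℓ ≥ exp(C_ℓ α_ℓ − η_ℓ) / (exp(C_ℓ α_ℓ − η_ℓ) + Σ_{j ≠ ℓ} exp(C_j α_j + η_j)). -/
theorem stmt9 {d m : ℕ} (t : ℕ) (ht : 1 ≤ t)
    (c ε δ : ℝ) (hc : 0 < c) (hε : 0 < ε)
    (WQ WK WV WO : Matrix (Fin d) (Fin d) ℝ)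
    (hsvQ : 0 < opNorm2 WQ) (hsvK : 0 < opNorm2 WK)
    (hsvV : 0 < opNorm2 WV) (hsvO : 0 < opNorm2 WO)
    (W : Matrix (Fin d) (Fin d) ℝ) (hW : W = WV * WO * WQ * WKᵀ)
    (x : Fin m → (Fin d → ℝ)) (hx : ∀ j, rowNorm (x j) = 1)
    (α : Fin m → ℝ) (hα0 : ∀ j, 0 ≤ α j) (hα1 : ∑ j, α j = 1)
    (a : Fin d → ℝ) (ha : a = (∑ j, α j • x j) ᵥ* (WV * WO)) (ha0 : a ≠ 0)
    (x' : Fin d → ℝ) (hx' : rowNorm x' = 1)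
    (hax' : a ⬝ᵥ x' ≥ (1 - δ) * rowNorm a)
    (hδ0 : 0 < δ)
    (hδ : δ ≤ (c * ε / (opNorm2 WQ * opNorm2 WK * opNorm2 WV * opNorm2 WO)) ^ 2)
    (hdiag : ∀ j, (x j ᵥ* W) ⬝ᵥ x j ≥ c)
    (hdom : ∀ j, ∀ i, i ≠ j → (x j ᵥ* W) ⬝ᵥ x j ≥ ε⁻¹ * |(x i ᵥ* W) ⬝ᵥ x j|)
    (α' : Fin m → ℝ)
    (hα' : α' = softmax (fun j => (1 / ((t : ℝ) + 1)) * ((x' ᵥ* (WQ * WKᵀ)) ⬝ᵥ x j)))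
    (C η : Fin m → ℝ)
    (hC : ∀ j, C j = (x j ᵥ* W) ⬝ᵥ x j / (((t : ℝ) + 1) * rowNorm a))
    (hη : ∀ j, η j = (1 + Real.sqrt 2) * ε * ((x j ᵥ* W) ⬝ᵥ x j) /
      (((t : ℝ) + 1) * rowNorm a)) :
    ∀ ℓ : Fin m,
      α' ℓ ≤ Real.exp (C ℓ * α ℓ + η ℓ) /
          (Real.exp (C ℓ * α ℓ + η ℓ) +
            ∑ j ∈ Finset.univ.erase ℓ, Real.exp (C j * α j - η j)) ∧
        α' ℓ ≥ Real.exp (C ℓ * α ℓ - η ℓ) /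
          (Real.exp (C ℓ * α ℓ - η ℓ) +
            ∑ j ∈ Finset.univ.erase ℓ, Real.exp (C j * α j + η j)) := by
  have hN : 0 < rowNorm a := by
    refine lt_of_le_of_ne (rowNorm_nonneg a) fun h => ha0 ?_
    have h2 := rowNorm_sq a
    rw [← h] at h2
    exact dotProduct_self_eq_zero.1 (by linarith)
  have hT : (0 : ℝ) < (t : ℝ) + 1 := by positivity
  set N := rowNorm a with hNdef
  set q := opNorm2 WQ
  set k := opNorm2 WK
  set v := opNorm2 WV
  set o := opNorm2 WO
  have hNle : N ≤ v * o := by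
    rw [hNdef, ha, ← Matrix.vecMul_vecMul]
    have h1 := rowNorm_vecMul_le WO ((∑ j, α j • x j) ᵥ* WV)
    have h2 := rowNorm_vecMul_le WV (∑ j, α j • x j)
    have h3 := rowNorm_comb_le x hx α hα0 hα1
    calc _ ≤ o * (v * rowNorm (∑ j, α j • x j)) :=
            h1.trans (mul_le_mul_of_nonneg_left h2 hsvO.le)
      _ ≤ o * (v * 1) := by gcongr
      _ = v * o := by ring
  set r : ℝ := c * ε / (q * k * v * o) with hr
  have hr0 : 0 < r := by positivity
  -- distance between N x' and a
  have hdist : rowNorm (N • x' - a) ≤ Real.sqrt 2 * r * N := by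
    apply le_of_sq_le_sq _ (by positivity)
    rw [mul_pow, mul_pow, Real.sq_sqrt (by norm_num), rowNorm_sq]
    have e1 := rowNorm_sq a
    have e2 := rowNorm_sq x'
    rw [hx'] at e2
    have e3 : (N • x' - a) ⬝ᵥ (N • x' - a) = N ^ 2 * (x' ⬝ᵥ x') - 2 * N * (a ⬝ᵥ x') + a ⬝ᵥ a := by
      simp only [sub_dotProduct, dotProduct_sub, smul_dotProduct, dotProduct_smul, smul_eq_mul]
      rw [dotProduct_comm x' a]; ring
    rw [e3, ← e1, ← e2, ← hNdef]
    have h5 := mul_le_mul_of_nonneg_left hax' hN.le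
    have h6 := mul_le_mul_of_nonneg_right hδ (sq_nonneg N)
    nlinarith
  have key : ∀ j, |N * ((x' ᵥ* (WQ * WKᵀ)) ⬝ᵥ x j) - ((x j ᵥ* W) ⬝ᵥ x j) * α j| ≤
      (1 + Real.sqrt 2) * ε * ((x j ᵥ* W) ⬝ᵥ x j) := by
    intro j
    set D := (x j ᵥ* W) ⬝ᵥ x j with hD
    have hDc : c ≤ D := hdiag j
    have b1 : |((N • x' - a) ᵥ* (WQ * WKᵀ)) ⬝ᵥ x j| ≤ Real.sqrt 2 * ε * D := by
      refine (bilin_le _ _ _ _).trans ?_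
      rw [hx]
      calc q * rowNorm (N • x' - a) * (k * 1) ≤ q * (Real.sqrt 2 * r * N) * (k * 1) := by gcongr
        _ ≤ q * (Real.sqrt 2 * r * (v * o)) * (k * 1) := by gcongr
        _ = Real.sqrt 2 * ε * c := by rw [hr]; field_simp
        _ ≤ _ := by gcongr
    have b2 : (a ᵥ* (WQ * WKᵀ)) ⬝ᵥ x j = ∑ i, α i * ((x i ᵥ* W) ⬝ᵥ x j) := by
      rw [ha, Matrix.vecMul_vecMul, ← Matrix.mul_assoc, ← hW, Matrix.sum_vecMul, sum_dotProduct]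
      simp [Matrix.smul_vecMul]
    have b3 : |(a ᵥ* (WQ * WKᵀ)) ⬝ᵥ x j - D * α j| ≤ ε * D := by
      rw [b2, ← Finset.add_sum_erase _ _ (Finset.mem_univ j), ← hD]
      rw [show α j * D + ∑ i ∈ Finset.univ.erase j, α i * ((x i ᵥ* W) ⬝ᵥ x j) - D * α j =
        ∑ i ∈ Finset.univ.erase j, α i * ((x i ᵥ* W) ⬝ᵥ x j) by ring]
      refine (Finset.abs_sum_le_sum_abs _ _).trans ?_
      calc _ ≤ ∑ i ∈ Finset.univ.erase j, α i * (ε * D) := by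
            refine Finset.sum_le_sum fun i hi => ?_
            rw [abs_mul, abs_of_nonneg (hα0 i)]
            refine mul_le_mul_of_nonneg_left ?_ (hα0 i)
            have := hdom j i (Finset.ne_of_mem_erase hi)
            rwa [ge_iff_le, inv_mul_le_iff₀ hε] at this
        _ ≤ ∑ i, α i * (ε * D) := by
            refine Finset.sum_le_sum_of_subset_of_nonneg (Finset.erase_subset _ _) fun i _ _ => ?_
            have := hα0 i
            have : 0 < D := hc.trans_le hDc
            positivity
        _ = ε * D := by rw [← Finset.sum_mul, hα1, one_mul]
    have b4 : ((N • x' - a) ᵥ* (WQ * WKᵀ)) ⬝ᵥ x j =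
        N * ((x' ᵥ* (WQ * WKᵀ)) ⬝ᵥ x j) - (a ᵥ* (WQ * WKᵀ)) ⬝ᵥ x j := by
      rw [Matrix.sub_vecMul, sub_dotProduct, Matrix.smul_vecMul, smul_dotProduct, smul_eq_mul]
    rw [b4] at b1
    rw [abs_le] at *
    constructor <;> linarith [b1.1, b1.2, b3.1, b3.2]
  set γ : Fin m → ℝ := fun j => (1 / ((t : ℝ) + 1)) * ((x' ᵥ* (WQ * WKᵀ)) ⬝ᵥ x j) with hγ
  have key2 : ∀ j, C j * α j - η j ≤ γ j ∧ γ j ≤ C j * α j + η j := by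
    intro j
    have hk := abs_le.1 (key j)
    have e : γ j = (N * ((x' ᵥ* (WQ * WKᵀ)) ⬝ᵥ x j)) / (((t : ℝ) + 1) * N) := by
      simp only [hγ]; field_simp
    rw [e, hC, hη, div_mul_eq_mul_div, ← sub_div, ← add_div]
    constructor <;> (apply div_le_div_of_nonneg_right _ (by positivity); linarith [hk.1, hk.2])
  intro ℓ
  have hs : α' ℓ = Real.exp (γ ℓ) /
      (Real.exp (γ ℓ) + ∑ j ∈ Finset.univ.erase ℓ, Real.exp (γ j)) := by
    rw [hα', Finset.add_sum_erase _ (fun j => Real.exp (γ j)) (Finset.mem_univ ℓ)]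
    rfl
  rw [hs]
  constructor
  · exact ratio_mono (Real.exp_pos _) (Real.exp_le_exp.2 (key2 ℓ).2)
      (Finset.sum_nonneg fun _ _ => (Real.exp_pos _).le)
      (Finset.sum_le_sum fun j _ => Real.exp_le_exp.2 (key2 j).1)
  · exact ratio_mono (Real.exp_pos _) (Real.exp_le_exp.2 (key2 ℓ).1)
      (Finset.sum_nonneg fun _ _ => (Real.exp_pos _).le)
      (Finset.sum_le_sum fun j _ => Real.exp_le_exp.2 (key2 j).2)
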